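/- Let t be a closed normal λ-term and T a closed λ-term. Then T is a storage operator for t if and only if there is a λ-term τ_t ≃β t such that, in directed λ-calculus, (T)[t]f head-reduces (by β and box reductions) to (f)τ_t[[t₁]⟨a̅₁/x̅₁⟩/y₁, …, [t_m]⟨a̅_m/x̅_m⟩/y_m], where each [tᵢ]⟨a̅ᵢ/x̅ᵢ⟩ is a box directed by a subterm tᵢ of t. -/

import Mathlib

/- Pure untyped λ-calculus with de Bruijn indices. -/

inductive Lam : Type
  | var : ℕ → Lam
  | app : Lam → Lam → Lam
  | abs : Lam → Lam
  deriving DecidableEq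

namespace Lam

/-- Renaming of free variables. -/
def rename (ρ : ℕ → ℕ) : Lam → Lam
  | var i => var (ρ i)
  | app u v => app (u.rename ρ) (v.rename ρ)
  | abs u => abs (u.rename (fun i => match i with | 0 => 0 | j+1 => ρ j + 1))

/-- Lifting of a simultaneous substitution under a binder. -/
def liftSub (σ : ℕ → Lam) : ℕ → Lam
  | 0 => var 0
  | i+1 => (σ i).rename (· + 1)

/-- Simultaneous (capture-avoiding) substitution of the free variables. -/
def subst (σ : ℕ → Lam) : Lam → Lam
  | var i => σ i
  | app u v => app (u.subst σ) (v.subst σ)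
  | abs u => abs (u.subst (liftSub σ))

/-- `u.subst0 v` is `u[v/x]` for the first variable. -/
def subst0 (u v : Lam) : Lam :=
  u.subst (fun i => match i with | 0 => v | j+1 => var j)

/-- One step of β-reduction (anywhere in the term). -/
inductive Beta : Lam → Lam → Prop
  | beta (u v : Lam) : Beta (app (abs u) v) (u.subst0 v)
  | appL {u u'} (v) : Beta u u' → Beta (app u v) (app u' v)
  | appR (u) {v v'} : Beta v v' → Beta (app u v) (app u v')
  | abs {u u'} : Beta u u' → Beta (abs u) (abs u')

/-- β-equivalence `≃β`. -/
def BetaEq : Lam → Lam → Prop := Relation.EqvGen Beta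

/-- A term is normal if it has no β-redex. -/
def Normal (t : Lam) : Prop := ∀ u, ¬ Beta t u

def IsAbs : Lam → Prop
  | abs _ => True
  | _ => False

/-- One step of head reduction: reduction of the head redex. -/
inductive HeadStep : Lam → Lam → Prop
  | beta (u v) : HeadStep (app (abs u) v) (u.subst0 v)
  | appL {u u'} (v) : ¬ u.IsAbs → HeadStep u u' → HeadStep (app u v) (app u' v)
  | abs {u u'} : HeadStep u u' → HeadStep (abs u) (abs u')

/-- `HeadRedN n u v` : `u` head-reduces to `v` in exactly `n` steps (`u ≻ v` with `n(u,v) = n`). -/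
inductive HeadRedN : ℕ → Lam → Lam → Prop
  | refl (u) : HeadRedN 0 u u
  | step {n u v w} : HeadStep u v → HeadRedN n v w → HeadRedN (n+1) u w

/-- `u ≻ v` : `v` is obtained from `u` by some head reductions. -/
def HeadRed (u v : Lam) : Prop := ∃ n, HeadRedN n u v

/-- Head normal form. -/
def HeadNF (t : Lam) : Prop := ∀ u, ¬ HeadStep t u

def ClosedUnder : ℕ → Lam → Prop
  | k, var i => i < k
  | k, app u v => ClosedUnder k u ∧ ClosedUnder k v
  | k, abs u => ClosedUnder (k+1) u

/-- Closed λ-term. -/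
def Closed (t : Lam) : Prop := ClosedUnder 0 t

/-- `(f)ⁿx` : `iterApp f n x = (f)(f)…(f)x`. -/
def iterApp (f : Lam) : ℕ → Lam → Lam
  | 0, x => x
  | n+1, x => app f (iterApp f n x)

/-- The Church integer `n̲ = λxλf(f)ⁿx`. -/
def church (n : ℕ) : Lam := abs (abs (iterApp (var 0) n (var 1)))

/-- `(t)w₁…wₖ`. -/
def appList (t : Lam) (ws : List Lam) : Lam := ws.foldl app t

/-- `T` is a storage operator for the closed normal term `t` :
there is `τ ≃β t` such that for every `θ ≃β t` there is a substitution `σ`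
(not touching the fresh variable `f`, represented by the de Bruijn index `0`)
with `(T)θf ≻ (f)σ(τ)`. -/
def IsStorageFor (T t : Lam) : Prop :=
  Closed T ∧ ∃ τ, BetaEq τ t ∧ ∀ θ, BetaEq θ t →
    ∃ σ : ℕ → Lam, σ 0 = var 0 ∧
      HeadRed (app (app T θ) (var 0)) (app (var 0) (τ.subst σ))

end Lam

/- The directed λ-calculus. -/

/-- Terms of the directed λ-calculus `Λ[□]` : λ-terms together with boxes
`[t]⟨a₁/x₁,…,aₙ/xₙ⟩` directed by a (normal) λ-term `t`, where the substitution
is represented as a function from de Bruijn indices to directed terms. -/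
inductive DT : Type
  | var : ℕ → DT
  | app : DT → DT → DT
  | abs : DT → DT
  | box : Lam → (ℕ → DT) → DT

namespace DT

def rename (ρ : ℕ → ℕ) : DT → DT
  | var i => var (ρ i)
  | app u v => app (u.rename ρ) (v.rename ρ)
  | abs u => abs (u.rename (fun i => match i with | 0 => 0 | j+1 => ρ j + 1))
  | box t as => box t (fun i => (as i).rename ρ)

def liftSub (σ : ℕ → DT) : ℕ → DT
  | 0 => var 0
  | i+1 => (σ i).rename (· + 1)

def subst (σ : ℕ → DT) : DT → DT
  | var i => σ i
  | app u v => app (u.subst σ) (v.subst σ)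
  | abs u => abs (u.subst (liftSub σ))
  | box t as => box t (fun i => (as i).subst σ)

def subst0 (u v : DT) : DT :=
  u.subst (fun i => match i with | 0 => v | j+1 => var j)

/-- The contractum of the `[□]`-redex `[t]⟨a̅/x̅⟩`, by cases on `t`. -/
def contract : Lam → (ℕ → DT) → DT
  | Lam.var i, as => as i
  | Lam.abs u, as =>
      abs (box u (fun i => match i with | 0 => var 0 | j+1 => (as j).rename (· + 1)))
  | Lam.app u v, as => app (box u as) (box v as)

def IsAbs : DT → Prop
  | abs _ => True
  | _ => False

/-- One step of `β[□]`-head reduction : reduction of the head redex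
(a β-redex or a box). -/
inductive DHead : DT → DT → Prop
  | beta (u v) : DHead (app (abs u) v) (u.subst0 v)
  | box (t : Lam) (as : ℕ → DT) : DHead (box t as) (contract t as)
  | appL {u u'} (v) : ¬ u.IsAbs → DHead u u' → DHead (app u v) (app u' v)
  | abs {u u'} : DHead u u' → DHead (abs u) (abs u')

/-- `u ≻_{β[□]} v`. -/
def DHeadRed : DT → DT → Prop := Relation.ReflTransGen DHead

end DT

/-- Embedding of λ-terms into the directed λ-calculus. -/
def Lam.toDT : Lam → DT
  | .var i => .var i
  | .app u v => .app u.toDT v.toDT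
  | .abs u => .abs u.toDT

/-- The subterm relation on λ-terms. -/
inductive Subterm : Lam → Lam → Prop
  | refl (t : Lam) : Subterm t t
  | appL {s u} (v) : Subterm s u → Subterm s (.app u v)
  | appR (u) {s v} : Subterm s v → Subterm s (.app u v)
  | abs {s u} : Subterm s u → Subterm s (.abs u)


/- Auxiliary material: substitution algebra. -/

theorem rtg_lift {α β : Type} {r : α → α → Prop} {q : β → β → Prop} (f : α → β)
    (hf : ∀ a b, r a b → q (f a) (f b)) {a b : α} (h : Relation.ReflTransGen r a b) :
    Relation.ReflTransGen q (f a) (f b) := by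
  induction h with
  | refl => exact .refl
  | tail _ h ih => exact ih.tail (hf _ _ h)

namespace Lam

def upr (ρ : ℕ → ℕ) : ℕ → ℕ
  | 0 => 0
  | j+1 => ρ j + 1

def inst (v : Lam) : ℕ → Lam
  | 0 => v
  | j+1 => var j

theorem rename_abs (ρ : ℕ → ℕ) (u : Lam) :
    (Lam.abs u).rename ρ = Lam.abs (u.rename (upr ρ)) := by
  have h : (fun i => match i with | 0 => 0 | j+1 => ρ j + 1) = upr ρ := by
    funext i; cases i <;> rfl
  rw [← h]
  rfl

theorem subst0_eq (u v : Lam) : u.subst0 v = u.subst (inst v) := by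
  unfold subst0
  congr 1

theorem rename_var (ρ : ℕ → ℕ) (i) : (Lam.var i).rename ρ = Lam.var (ρ i) := rfl
theorem rename_app (ρ : ℕ → ℕ) (u v) : (Lam.app u v).rename ρ = Lam.app (u.rename ρ) (v.rename ρ) := rfl
theorem subst_var (σ : ℕ → Lam) (i) : (Lam.var i).subst σ = σ i := rfl
theorem subst_app (σ : ℕ → Lam) (u v) : (Lam.app u v).subst σ = Lam.app (u.subst σ) (v.subst σ) := rfl
theorem subst_abs (σ : ℕ → Lam) (u) : (Lam.abs u).subst σ = Lam.abs (u.subst (liftSub σ)) := rfl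

theorem rename_rename (M : Lam) (ρ ρ2 : ℕ → ℕ) :
    (M.rename ρ).rename ρ2 = M.rename (fun i => ρ2 (ρ i)) := by
  induction M generalizing ρ ρ2 with
  | var i => rfl
  | app u v hu hv => simp only [rename_app, hu, hv]
  | abs u hu =>
    simp only [rename_abs, hu]
    congr 2
    funext i; cases i <;> rfl

theorem rename_eq_subst (M : Lam) (ρ : ℕ → ℕ) : M.rename ρ = M.subst (fun i => var (ρ i)) := by
  induction M generalizing ρ with
  | var i => rfl
  | app u v hu hv => simp only [rename_app, subst_app, hu, hv]
  | abs u hu =>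
    simp only [rename_abs, subst_abs, hu]
    congr 2
    funext i; cases i <;> rfl

theorem rename_subst (M : Lam) (ρ : ℕ → ℕ) (σ : ℕ → Lam) :
    (M.rename ρ).subst σ = M.subst (fun i => σ (ρ i)) := by
  induction M generalizing ρ σ with
  | var i => rfl
  | app u v hu hv => simp only [rename_app, subst_app, hu, hv]
  | abs u hu =>
    simp only [rename_abs, subst_abs, hu]
    congr 2
    funext i; cases i <;> rfl

theorem subst_rename (M : Lam) (ρ : ℕ → ℕ) (σ : ℕ → Lam) :
    (M.subst σ).rename ρ = M.subst (fun i => (σ i).rename ρ) := by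
  induction M generalizing ρ σ with
  | var i => rfl
  | app u v hu hv => simp only [rename_app, subst_app, hu, hv]
  | abs u hu =>
    simp only [rename_abs, subst_abs, hu]
    congr 2
    funext i; cases i with
    | zero => rfl
    | succ j => simp only [liftSub, rename_rename]; rfl

theorem subst_subst (M : Lam) (σ σ2 : ℕ → Lam) :
    (M.subst σ).subst σ2 = M.subst (fun i => (σ i).subst σ2) := by
  induction M generalizing σ σ2 with
  | var i => rfl
  | app u v hu hv => simp only [subst_app, hu, hv]
  | abs u hu =>
    simp only [subst_abs, hu]
    congr 2
    funext i; cases i with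
    | zero => rfl
    | succ j => simp only [liftSub, rename_subst, subst_rename]

theorem subst_id (M : Lam) : M.subst var = M := by
  induction M with
  | var i => rfl
  | app u v hu hv => simp only [subst_app, hu, hv]
  | abs u hu =>
    rw [subst_abs]
    have : liftSub var = var := by funext i; cases i <;> rfl
    rw [this, hu]

theorem rename_id (M : Lam) : M.rename (fun i => i + 0) = M := by
  rw [rename_eq_subst]; exact subst_id M

theorem subst0_subst (u v : Lam) (σ : ℕ → Lam) :
    (u.subst0 v).subst σ = (u.subst (liftSub σ)).subst0 (v.subst σ) := by
  simp only [subst0_eq, subst_subst]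
  congr 1
  funext i; cases i with
  | zero => rfl
  | succ j => simp only [inst, liftSub, rename_subst, subst_var]; exact (subst_id _).symm

theorem subst0_rename (u v : Lam) (ρ : ℕ → ℕ) :
    (u.subst0 v).rename ρ = (u.rename (upr ρ)).subst0 (v.rename ρ) := by
  simp only [subst0_eq, subst_rename, rename_subst]
  congr 1
  funext i; cases i <;> rfl

theorem lift_inst (σ : ℕ → Lam) (v : Lam) (u : Lam) :
    (u.subst (liftSub σ)).subst0 v = u.subst (fun i => match i with | 0 => v | j+1 => σ j) := by
  simp only [subst0_eq, subst_subst]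
  congr 1
  funext i; cases i with
  | zero => rfl
  | succ j => simp only [liftSub, rename_subst, inst]; exact subst_id _

theorem closed_subst (M : Lam) (k : ℕ) (σ : ℕ → Lam) (h : ClosedUnder k M)
    (hs : ∀ i < k, σ i = var i) : M.subst σ = M := by
  induction M generalizing k σ with
  | var i => exact hs i h
  | app u v hu hv => simp only [subst_app, hu k σ h.1 hs, hv k σ h.2 hs]
  | abs u hu =>
    rw [subst_abs, hu (k+1) _ h]
    intro i hi
    cases i with
    | zero => rfl
    | succ j => simp only [liftSub]; rw [hs j (by omega)]; rfl

theorem closed_of_rename (M : Lam) (k : ℕ) (ρ : ℕ → ℕ) (h : ClosedUnder k (M.rename ρ))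
    (hs : ∀ i, ρ i < k → i < k) : ClosedUnder k M := by
  induction M generalizing k ρ with
  | var i => exact hs i h
  | app u v hu hv => exact ⟨hu k ρ h.1 hs, hv k ρ h.2 hs⟩
  | abs u hu =>
    rw [rename_abs] at h
    refine hu (k+1) _ h ?_
    intro i hi
    cases i with
    | zero => omega
    | succ j => simp only [upr] at hi; have := hs j (by omega); omega

/- Parallel reduction and confluence. -/

inductive Par : Lam → Lam → Prop
  | var (i) : Par (var i) (var i)
  | app {u u2 v v2} : Par u u2 → Par v v2 → Par (app u v) (app u2 v2)
  | abs {u u2} : Par u u2 → Par (abs u) (abs u2)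
  | beta {u u2 v v2} : Par u u2 → Par v v2 → Par (app (abs u) v) (u2.subst0 v2)

theorem Par.rfl (M : Lam) : Par M M := by
  induction M with
  | var i => exact .var i
  | app u v hu hv => exact .app hu hv
  | abs u hu => exact .abs hu

theorem Par.ren {M N : Lam} (h : Par M N) (ρ : ℕ → ℕ) : Par (M.rename ρ) (N.rename ρ) := by
  induction h generalizing ρ with
  | var i => exact .var _
  | app _ _ h1 h2 => exact .app (h1 ρ) (h2 ρ)
  | abs _ h1 => simp only [rename_abs]; exact .abs (h1 _)
  | beta _ _ h1 h2 =>
    rw [subst0_rename, rename_app, rename_abs]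
    exact .beta (h1 _) (h2 _)

theorem Par.sub {M N : Lam} (h : Par M N) (σ σ2 : ℕ → Lam) (hs : ∀ i, Par (σ i) (σ2 i)) :
    Par (M.subst σ) (N.subst σ2) := by
  have lift : ∀ {σ σ2 : ℕ → Lam}, (∀ i, Par (σ i) (σ2 i)) →
      ∀ i, Par (liftSub σ i) (liftSub σ2 i) := by
    intro σ σ2 hs i
    cases i with
    | zero => exact .var 0
    | succ j => exact (hs j).ren _
  induction h generalizing σ σ2 with
  | var i => exact hs i
  | app _ _ h1 h2 => exact .app (h1 _ _ hs) (h2 _ _ hs)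
  | abs _ h1 => exact .abs (h1 _ _ (lift hs))
  | beta _ _ h1 h2 =>
    rw [subst0_subst]
    exact .beta (h1 _ _ (lift hs)) (h2 _ _ hs)

theorem Par.sub0 {u u2 v v2 : Lam} (h : Par u u2) (h2 : Par v v2) :
    Par (u.subst0 v) (u2.subst0 v2) := by
  simp only [subst0_eq]
  apply h.sub
  intro i
  cases i with
  | zero => exact h2
  | succ j => exact .var j

theorem Par.diamond {M N P : Lam} (h : Par M N) (h2 : Par M P) : ∃ Q, Par N Q ∧ Par P Q := by
  induction h generalizing P with
  | var i => cases h2; exact ⟨_, .var i, .var i⟩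
  | abs _ ih =>
    cases h2 with
    | abs h2 => obtain ⟨Q, a, b⟩ := ih h2; exact ⟨_, .abs a, .abs b⟩
  | app hu hv ihu ihv =>
    cases h2 with
    | app h3 h4 =>
      obtain ⟨Q, a, b⟩ := ihu h3
      obtain ⟨Q2, a2, b2⟩ := ihv h4
      exact ⟨_, .app a a2, .app b b2⟩
    | beta h3 h4 =>
      cases hu with
      | abs hu =>
        obtain ⟨Q, a, b⟩ := ihu (.abs h3)
        obtain ⟨Q2, a2, b2⟩ := ihv h4
        cases b with
        | abs b => cases a with
          | abs a => exact ⟨_, .beta a a2, b.sub0 b2⟩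
  | beta hu hv ihu ihv =>
    cases h2 with
    | app h3 h4 =>
      cases h3 with
      | abs h3 =>
        obtain ⟨Q, a, b⟩ := ihu h3
        obtain ⟨Q2, a2, b2⟩ := ihv h4
        exact ⟨_, a.sub0 a2, .beta b b2⟩
    | beta h3 h4 =>
      obtain ⟨Q, a, b⟩ := ihu h3
      obtain ⟨Q2, a2, b2⟩ := ihv h4
      exact ⟨_, a.sub0 a2, b.sub0 b2⟩

theorem Beta.par {M N : Lam} (h : Beta M N) : Par M N := by
  induction h with
  | beta u v => exact .beta (.rfl _) (.rfl _)
  | appL v _ ih => exact .app ih (.rfl _)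
  | appR u _ ih => exact .app (.rfl _) ih
  | abs _ ih => exact .abs ih

abbrev Betas := Relation.ReflTransGen Beta

theorem Betas.app {u u2 v v2 : Lam} (h : Betas u u2) (h2 : Betas v v2) :
    Betas (app u v) (app u2 v2) :=
  (rtg_lift (fun x => Lam.app x v) (fun _ _ h => Beta.appL v h) h).trans
    (rtg_lift (fun x => Lam.app u2 x) (fun _ _ h => Beta.appR u2 h) h2)

theorem Betas.abs {u u2 : Lam} (h : Betas u u2) : Betas (abs u) (abs u2) :=
  rtg_lift Lam.abs (fun _ _ h => Beta.abs h) h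

theorem Par.betas {M N : Lam} (h : Par M N) : Betas M N := by
  induction h with
  | var i => exact .refl
  | app _ _ h1 h2 => exact Betas.app h1 h2
  | abs _ h1 => exact Betas.abs h1
  | beta _ _ h1 h2 => exact (Betas.app (Betas.abs h1) h2).tail (.beta _ _)

theorem Normal.betas {t u : Lam} (ht : Normal t) (h : Betas t u) : u = t := by
  cases h.cases_head with
  | inl h => exact h.symm
  | inr h => obtain ⟨c, hc, _⟩ := h; exact absurd hc (ht c)

theorem BetaEq.betas {θ t : Lam} (h : BetaEq θ t) (ht : Normal t) : Betas θ t := by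
  have heq : Equivalence (Relation.Join (Relation.ReflTransGen Par)) := by
    apply Relation.equivalence_join_reflTransGen
    intro a b c h1 h2
    obtain ⟨d, h3, h4⟩ := h1.diamond h2
    exact ⟨d, .single h3, .single h4⟩
  have hj : Relation.Join (Relation.ReflTransGen Par) θ t := by
    have gen : ∀ a b, BetaEq a b → Relation.Join (Relation.ReflTransGen Par) a b := by
      intro a b h
      induction h with
      | rel a b h => exact ⟨b, .single h.par, .refl⟩
      | refl a => exact heq.refl a
      | symm a b _ ih => exact heq.symm ih
      | trans a b c _ _ h1 h2 => exact heq.trans h1 h2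
    exact gen _ _ h
  obtain ⟨c, h1, h2⟩ := hj
  have conv : ∀ {a b}, Relation.ReflTransGen Par a b → Betas a b := by
    intro a b h
    induction h with
    | refl => exact .refl
    | tail _ h ih => exact ih.trans h.betas
  rw [ht.betas (conv h2)] at h1
  exact conv h1

/- BetaEq is a congruence, stable by substitution. -/

theorem Betas.eq {M N : Lam} (h : Betas M N) : BetaEq M N := by
  induction h with
  | refl => exact .refl _
  | tail _ h ih => exact ih.trans _ _ _ (.rel _ _ h)

theorem EqvGen_lift {f : Lam → Lam} (hf : ∀ a b, Beta a b → BetaEq (f a) (f b))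
    {a b : Lam} (h : BetaEq a b) : BetaEq (f a) (f b) := by
  induction h with
  | rel a b h => exact hf a b h
  | refl a => exact .refl _
  | symm a b _ ih => exact .symm _ _ ih
  | trans a b c _ _ h1 h2 => exact .trans _ _ _ h1 h2

theorem BetaEq.app {u u2 v v2 : Lam} (h : BetaEq u u2) (h2 : BetaEq v v2) :
    BetaEq (app u v) (app u2 v2) :=
  .trans _ _ _ (EqvGen_lift (f := fun x => Lam.app x v) (fun _ _ h => .rel _ _ (.appL _ h)) h)
    (EqvGen_lift (f := fun x => Lam.app u2 x) (fun _ _ h => .rel _ _ (.appR _ h)) h2)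

theorem BetaEq.abs {u u2 : Lam} (h : BetaEq u u2) : BetaEq (abs u) (abs u2) :=
  EqvGen_lift (f := Lam.abs) (fun _ _ h => .rel _ _ (.abs h)) h

theorem BetaEq.sub {u u2 : Lam} (h : BetaEq u u2) (σ : ℕ → Lam) :
    BetaEq (u.subst σ) (u2.subst σ) :=
  EqvGen_lift (f := fun x => x.subst σ)
    (fun _ _ h => (Par.betas (h.par.sub σ σ (fun _ => .rfl _))).eq) h

theorem BetaEq.ren {u u2 : Lam} (h : BetaEq u u2) (ρ : ℕ → ℕ) :
    BetaEq (u.rename ρ) (u2.rename ρ) := by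
  simp only [rename_eq_subst]; exact h.sub _

theorem BetaEq.subPt (M : Lam) (σ σ2 : ℕ → Lam) (h : ∀ i, BetaEq (σ i) (σ2 i)) :
    BetaEq (M.subst σ) (M.subst σ2) := by
  induction M generalizing σ σ2 with
  | var i => exact h i
  | app u v hu hv => exact (hu _ _ h).app (hv _ _ h)
  | abs u hu =>
    refine BetaEq.abs (hu _ _ ?_)
    intro i
    cases i with
    | zero => exact .refl _
    | succ j => exact (h j).ren _

/- Lifting reductions along a renaming. -/

theorem Beta.unrename {M P : Lam} {ρ : ℕ → ℕ} (h : Beta (M.rename ρ) P) :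
    ∃ N, Beta M N ∧ P = N.rename ρ := by
  induction M generalizing ρ P with
  | var i => cases h
  | abs u hu =>
    rw [rename_abs] at h
    cases h with
    | abs h =>
      obtain ⟨N, h1, rfl⟩ := hu h
      exact ⟨_, .abs h1, (rename_abs _ _).symm⟩
  | app u v hu hv =>
    rw [rename_app] at h
    generalize hw : u.rename ρ = w at h
    cases h with
    | appL _ h =>
      subst hw
      obtain ⟨N, h1, rfl⟩ := hu h
      exact ⟨_, .appL _ h1, rfl⟩
    | appR _ h =>
      subst hw
      obtain ⟨N, h1, rfl⟩ := hv h
      exact ⟨_, .appR _ h1, rfl⟩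
    | beta a _ =>
      cases u with
      | var i => cases hw
      | app _ _ => cases hw
      | abs u =>
        rw [rename_abs] at hw
        cases hw
        exact ⟨_, .beta _ _, (subst0_rename _ _ _).symm⟩

theorem eq_of_rename {M t : Lam} {ρ : ℕ → ℕ} (ht : Closed t) (hn : Normal t)
    (h : BetaEq (M.rename ρ) t) : BetaEq M t := by
  have h1 := h.betas hn
  have key : ∀ P Q, Betas P Q → ∀ M : Lam, P = M.rename ρ → ∃ N, Betas M N ∧ Q = N.rename ρ := by
    intro P Q h
    induction h with
    | refl => intro M hM; exact ⟨M, .refl, hM⟩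
    | tail _ h ih =>
      intro M hM
      obtain ⟨N, h1, rfl⟩ := ih M hM
      obtain ⟨N2, h2, rfl⟩ := h.unrename
      exact ⟨N2, h1.tail h2, rfl⟩
  obtain ⟨N, h2, h3⟩ := key _ _ h1 M rfl
  have hc : ClosedUnder 0 N := closed_of_rename N 0 ρ (h3 ▸ ht) (fun i hi => absurd hi (by omega))
  rw [rename_eq_subst, closed_subst N 0 _ hc (fun i hi => absurd hi (by omega))] at h3
  rw [h3]; exact h2.eq

/- Weak head reduction and standardization. -/

inductive WH : Lam → Lam → Prop
  | beta (u v) : WH (app (abs u) v) (u.subst0 v)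
  | appL {u u2} (v) : WH u u2 → WH (app u v) (app u2 v)

abbrev WHs := Relation.ReflTransGen WH

theorem WH.det {M N P : Lam} (h : WH M N) (h2 : WH M P) : N = P := by
  induction h generalizing P with
  | beta u v =>
    cases h2 with
    | beta => rfl
    | appL _ h => cases h
  | appL v h ih =>
    cases h2 with
    | beta => cases h
    | appL _ h => rw [ih h]

theorem WH.beta1 {M N : Lam} (h : WH M N) : Beta M N := by
  induction h with
  | beta u v => exact .beta _ _
  | appL v _ ih => exact .appL _ ih

theorem WHs.eq {M N : Lam} (h : WHs M N) : BetaEq M N :=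
  Betas.eq (rtg_lift id (fun _ _ h => WH.beta1 h) h)

theorem WH.head {M N : Lam} (h : WH M N) : HeadStep M N := by
  induction h with
  | beta u v => exact .beta _ _
  | appL v h ih =>
    refine .appL _ ?_ ih
    cases h <;> exact fun h => h

theorem WH.sub {M N : Lam} (h : WH M N) (σ : ℕ → Lam) : WH (M.subst σ) (N.subst σ) := by
  induction h with
  | beta u v => rw [subst0_subst]; exact .beta _ _
  | appL v _ ih => exact .appL _ ih

theorem WHs.sub {M N : Lam} (h : WHs M N) (σ : ℕ → Lam) : WHs (M.subst σ) (N.subst σ) :=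
  rtg_lift (fun x => x.subst σ) (fun _ _ h => h.sub σ) h

theorem WHs.appL {M N : Lam} (h : WHs M N) (v : Lam) : WHs (app M v) (app N v) :=
  rtg_lift (fun x => Lam.app x v) (fun _ _ h => .appL v h) h

theorem WHs.ren {M N : Lam} (h : WHs M N) (ρ : ℕ → ℕ) : WHs (M.rename ρ) (N.rename ρ) := by
  simp only [rename_eq_subst]; exact h.sub _

theorem HeadStep.wh {M N : Lam} (h : HeadStep M N) (hM : ¬ M.IsAbs) : WH M N := by
  induction h with
  | beta u v => exact .beta _ _
  | appL v h1 _ ih => exact .appL _ (ih h1)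
  | abs _ _ => exact absurd trivial hM

theorem HeadRed.whs {M N : Lam} (h : HeadRed M N) (hN : ¬ N.IsAbs) : WHs M N := by
  obtain ⟨n, h⟩ := h
  have : WHs M N ∧ ¬ M.IsAbs := by
    induction h with
    | refl u => exact ⟨.refl, hN⟩
    | @step n u v w h1 _ ih =>
      obtain ⟨a, b⟩ := ih hN
      have : ¬ u.IsAbs := by
        intro hc
        cases h1 with
        | beta => exact hc
        | appL => exact hc
        | abs => exact b trivial
      exact ⟨a.head (h1.wh this), this⟩
  exact this.1

theorem WHs.headRed {M N : Lam} (h : WHs M N) : HeadRed M N := by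
  induction h using Relation.ReflTransGen.head_induction_on with
  | refl => exact ⟨0, .refl _⟩
  | head h _ ih => obtain ⟨n, ih⟩ := ih; exact ⟨n+1, .step h.head ih⟩

theorem WHs.unique {M N P : Lam} (h : WHs M N) (h2 : WHs M P) (hN : ∀ x, ¬ WH N x)
    (hP : ∀ x, ¬ WH P x) : N = P := by
  induction h using Relation.ReflTransGen.head_induction_on with
  | refl =>
    rcases h2.cases_head with h | ⟨c, h, _⟩
    · exact h
    · exact absurd h (hN c)
  | head h _ ih =>
    rcases h2.cases_head with h3 | ⟨c, h3, h4⟩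
    · subst h3; exact absurd h (hP _)
    · rw [← h.det h3] at h4; exact ih h4

inductive Std : Lam → Lam → Prop
  | var {M i} : WHs M (var i) → Std M (var i)
  | app {M u v u2 v2} : WHs M (app u v) → Std u u2 → Std v v2 → Std M (app u2 v2)
  | abs {M u u2} : WHs M (abs u) → Std u u2 → Std M (abs u2)

theorem Std.expand {M N P : Lam} (h : WHs M N) (h2 : Std N P) : Std M P := by
  cases h2 with
  | var h1 => exact .var (h.trans h1)
  | app h1 a b => exact .app (h.trans h1) a b
  | abs h1 a => exact .abs (h.trans h1) a

theorem Std.rfl (M : Lam) : Std M M := by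
  induction M with
  | var i => exact .var .refl
  | app u v hu hv => exact .app .refl hu hv
  | abs u hu => exact .abs .refl hu

theorem Std.ren {M N : Lam} (h : Std M N) (ρ : ℕ → ℕ) : Std (M.rename ρ) (N.rename ρ) := by
  induction h generalizing ρ with
  | var h => exact .var (h.ren ρ)
  | app h _ _ h1 h2 => exact .app (h.ren ρ) (h1 ρ) (h2 ρ)
  | abs h _ h1 =>
    have := h.ren ρ
    rw [rename_abs] at this ⊢
    exact .abs this (h1 _)

theorem Std.sub {M N : Lam} (h : Std M N) (σ σ2 : ℕ → Lam) (hs : ∀ i, Std (σ i) (σ2 i)) :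
    Std (M.subst σ) (N.subst σ2) := by
  induction h generalizing σ σ2 with
  | var h => exact Std.expand (h.sub σ) (hs _)
  | app h _ _ h1 h2 => exact .app (h.sub σ) (h1 _ _ hs) (h2 _ _ hs)
  | abs h _ h1 =>
    refine .abs (h.sub σ) (h1 _ _ ?_)
    intro i
    cases i with
    | zero => exact .rfl _
    | succ j => exact (hs j).ren _

theorem Std.step {M N P : Lam} (h : Std M N) (h2 : Beta N P) : Std M P := by
  induction h2 generalizing M with
  | beta u v =>
    cases h with
    | app h hu hv =>
      cases hu with
      | abs h3 hu =>
        refine Std.expand ((h.trans (h3.appL _)).tail (.beta _ _)) ?_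
        simp only [subst0_eq]
        apply hu.sub
        intro i
        cases i with
        | zero => exact hv
        | succ j => exact .rfl _
  | appL v _ ih => cases h with
    | app h hu hv => exact .app h (ih hu) hv
  | appR u _ ih => cases h with
    | app h hu hv => exact .app h hu (ih hv)
  | abs _ ih => cases h with
    | abs h hu => exact .abs h (ih hu)

theorem Betas.std {M N : Lam} (h : Betas M N) : Std M N := by
  induction h with
  | refl => exact .rfl _
  | tail _ h ih => exact ih.step h

end Lam


namespace DT
open Lam (upr)

def inst (v : DT) : ℕ → DT
  | 0 => v
  | j+1 => var j

def bcons (as : ℕ → DT) : ℕ → DT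
  | 0 => var 0
  | j+1 => (as j).rename (· + 1)

theorem rename_abs (ρ : ℕ → ℕ) (u : DT) :
    (DT.abs u).rename ρ = DT.abs (u.rename (upr ρ)) := by
  have h : (fun i => match i with | 0 => 0 | j+1 => ρ j + 1) = upr ρ := by
    funext i; cases i <;> rfl
  rw [← h]
  rfl

theorem subst0_eq (u v : DT) : u.subst0 v = u.subst (inst v) := by
  unfold subst0
  congr 1

theorem contract_abs (u : Lam) (as : ℕ → DT) :
    contract (.abs u) as = abs (box u (liftSub as)) := by
  unfold contract
  congr 2

theorem rename_app (ρ : ℕ → ℕ) (u v) : (DT.app u v).rename ρ = DT.app (u.rename ρ) (v.rename ρ) := rfl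
theorem rename_box (ρ : ℕ → ℕ) (s as) : (DT.box s as).rename ρ = DT.box s (fun i => (as i).rename ρ) := rfl
theorem subst_var (σ : ℕ → DT) (i) : (DT.var i).subst σ = σ i := rfl
theorem subst_app (σ : ℕ → DT) (u v) : (DT.app u v).subst σ = DT.app (u.subst σ) (v.subst σ) := rfl
theorem subst_abs (σ : ℕ → DT) (u) : (DT.abs u).subst σ = DT.abs (u.subst (liftSub σ)) := rfl
theorem subst_box (σ : ℕ → DT) (s as) : (DT.box s as).subst σ = DT.box s (fun i => (as i).subst σ) := rfl

theorem rename_rename (M : DT) (ρ ρ2 : ℕ → ℕ) :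
    (M.rename ρ).rename ρ2 = M.rename (fun i => ρ2 (ρ i)) := by
  induction M generalizing ρ ρ2 with
  | var i => rfl
  | app u v hu hv => simp only [rename_app, hu, hv]
  | abs u hu =>
    simp only [rename_abs, hu]
    congr 2
    funext i; cases i <;> rfl
  | box s as ih => simp only [rename_box, ih]

theorem rename_eq_subst (M : DT) (ρ : ℕ → ℕ) : M.rename ρ = M.subst (fun i => var (ρ i)) := by
  induction M generalizing ρ with
  | var i => rfl
  | app u v hu hv => simp only [rename_app, subst_app, hu, hv]
  | abs u hu =>
    simp only [rename_abs, subst_abs, hu]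
    congr 2
    funext i; cases i <;> rfl
  | box s as ih => simp only [rename_box, subst_box, ih]

theorem rename_subst (M : DT) (ρ : ℕ → ℕ) (σ : ℕ → DT) :
    (M.rename ρ).subst σ = M.subst (fun i => σ (ρ i)) := by
  induction M generalizing ρ σ with
  | var i => rfl
  | app u v hu hv => simp only [rename_app, subst_app, hu, hv]
  | abs u hu =>
    simp only [rename_abs, subst_abs, hu]
    congr 2
    funext i; cases i <;> rfl
  | box s as ih => simp only [rename_box, subst_box, ih]

theorem subst_id (M : DT) : M.subst var = M := by
  induction M with
  | var i => rfl
  | app u v hu hv => simp only [subst_app, hu, hv]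
  | abs u hu =>
    rw [subst_abs]
    have : liftSub var = var := by funext i; cases i <;> rfl
    rw [this, hu]
  | box s as ih => simp only [subst_box, ih]

theorem rename_id (M : DT) : M.rename (fun i => i + 0) = M := by
  rw [rename_eq_subst]; exact subst_id M

/- Weak head reduction of directed terms. -/

inductive DW : DT → DT → Prop
  | beta (u v) : DW (app (abs u) v) (u.subst0 v)
  | box (t : Lam) (as : ℕ → DT) : DW (box t as) (contract t as)
  | appL {u u2} (v) : DW u u2 → DW (app u v) (app u2 v)

abbrev DWs := Relation.ReflTransGen DW

theorem DW.head {M N : DT} (h : DW M N) : DHead M N := by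
  induction h with
  | beta u v => exact .beta _ _
  | box t as => exact .box _ _
  | appL v h ih =>
    refine .appL _ ?_ ih
    cases h <;> exact fun h => h

theorem DHead.wh {M N : DT} (h : DHead M N) (hM : ¬ M.IsAbs) : DW M N := by
  induction h with
  | beta u v => exact .beta _ _
  | box t as => exact .box _ _
  | appL v h1 _ ih => exact .appL _ (ih h1)
  | abs _ _ => exact absurd trivial hM

theorem DHeadRed.whs {M N : DT} (h : DHeadRed M N) (hN : ¬ N.IsAbs) : DWs M N := by
  have : DWs M N ∧ ¬ M.IsAbs := by
    induction h using Relation.ReflTransGen.head_induction_on with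
    | refl => exact ⟨.refl, hN⟩
    | @head u v h1 _ ih =>
      obtain ⟨a, b⟩ := ih
      have : ¬ u.IsAbs := by
        intro hc
        cases h1 with
        | beta => exact hc
        | box => exact hc
        | appL => exact hc
        | abs => exact b trivial
      exact ⟨a.head (h1.wh this), this⟩
  exact this.1

end DT

open Lam in
/-- Simulation relation between directed terms and λ-terms. -/
inductive Sim : DT → Lam → Prop
  | var (i) : Sim (.var i) (.var i)
  | app {u v u2 v2} : Sim u u2 → Sim v v2 → Sim (.app u v) (.app u2 v2)
  | abs {u u2} : Sim u u2 → Sim (.abs u) (.abs u2)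
  | box {s as θ bs} : Std θ s → (∀ i, Sim (as i) (bs i)) → Sim (.box s as) (θ.subst bs)

theorem Sim.ren {D M} (h : Sim D M) (ρ : ℕ → ℕ) : Sim (D.rename ρ) (M.rename ρ) := by
  induction h generalizing ρ with
  | var i => exact .var _
  | app _ _ h1 h2 => exact .app (h1 ρ) (h2 ρ)
  | abs _ h => rw [DT.rename_abs, Lam.rename_abs]; exact .abs (h _)
  | box hs _ ih => rw [Lam.subst_rename]; exact .box hs (fun i => ih i ρ)

theorem Sim.lift {σ : ℕ → DT} {σ2 : ℕ → Lam} (hs : ∀ i, Sim (σ i) (σ2 i)) :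
    ∀ i, Sim (DT.liftSub σ i) (Lam.liftSub σ2 i) := by
  intro i
  cases i with
  | zero => exact .var 0
  | succ j => exact (hs j).ren _

theorem Sim.sub {D M} (h : Sim D M) (σ : ℕ → DT) (σ2 : ℕ → Lam) (hs : ∀ i, Sim (σ i) (σ2 i)) :
    Sim (D.subst σ) (M.subst σ2) := by
  induction h generalizing σ σ2 with
  | var i => exact hs i
  | app _ _ h1 h2 => exact .app (h1 _ _ hs) (h2 _ _ hs)
  | abs _ h => exact .abs (h _ _ (Sim.lift hs))
  | box hst _ ih => rw [Lam.subst_subst]; exact .box hst (fun i => ih i _ _ hs)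

theorem Sim.unrename {D : DT} {M : Lam} {ρ : ℕ → ℕ} (h : Sim (D.rename ρ) M) :
    ∃ N : Lam, M = N.rename ρ := by
  induction D generalizing M ρ with
  | var i => cases h; exact ⟨.var i, rfl⟩
  | app u v hu hv =>
    cases h with
    | app h1 h2 =>
      obtain ⟨a, rfl⟩ := hu h1
      obtain ⟨b, rfl⟩ := hv h2
      exact ⟨.app a b, rfl⟩
  | abs u hu =>
    rw [DT.rename_abs] at h
    cases h with
    | abs h1 =>
      obtain ⟨a, rfl⟩ := hu h1
      exact ⟨.abs a, (Lam.rename_abs _ _).symm⟩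
  | box s as ih =>
    rw [DT.rename_box] at h
    cases h with
    | @box _ _ θ bs hs hb =>
      choose c hc using fun i => ih i (hb i)
      refine ⟨θ.subst c, ?_⟩
      rw [Lam.subst_rename]
      congr 1
      funext i; exact hc i

open Lam in
theorem Sim.step {D D2 : DT} {M : Lam} (h : Sim D M) (hd : DT.DW D D2) :
    ∃ M2, WHs M M2 ∧ Sim D2 M2 := by
  induction hd generalizing M with
  | beta u v =>
    cases h with
    | app h1 h2 =>
      cases h1 with
      | abs h1 =>
        refine ⟨_, .single (.beta _ _), ?_⟩
        rw [DT.subst0_eq, Lam.subst0_eq]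
        apply h1.sub
        intro i
        cases i with
        | zero => exact h2
        | succ j => exact .var j
  | appL v _ ih =>
    cases h with
    | app h1 h2 =>
      obtain ⟨M2, a, b⟩ := ih h1
      exact ⟨_, a.appL _, .app b h2⟩
  | box t as =>
    cases h with
    | @box _ _ θ bs hs hb =>
      cases hs with
      | @var _ i h => exact ⟨_, h.sub bs, hb i⟩
      | app h h1 h2 => exact ⟨_, h.sub bs, .app (.box h1 hb) (.box h2 hb)⟩
      | abs h h1 =>
        refine ⟨_, h.sub bs, ?_⟩
        rw [DT.contract_abs]
        exact .abs (.box h1 (Sim.lift hb))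

open Lam in
theorem Sim.steps {D D2 : DT} {M : Lam} (h : Sim D M) (hd : DT.DWs D D2) :
    ∃ M2, WHs M M2 ∧ Sim D2 M2 := by
  induction hd with
  | refl => exact ⟨M, .refl, h⟩
  | tail _ hd ih =>
    obtain ⟨M2, a, b⟩ := ih
    obtain ⟨M3, c, d⟩ := b.step hd
    exact ⟨M3, a.trans c, d⟩

theorem Sim.toDT (T : Lam) : Sim T.toDT T := by
  induction T with
  | var i => exact .var i
  | app u v hu hv => exact .app hu hv
  | abs u hu => exact .abs hu

/- Environments: indices `≤ k` are kept, the others come from a family `σ`. -/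

def extL (k : ℕ) (σ : ℕ → Lam) (i : ℕ) : Lam :=
  if i ≤ k then .var i else (σ (i - k - 1)).rename (· + k)

def extD (k : ℕ) (σ : ℕ → DT) (i : ℕ) : DT :=
  if i ≤ k then .var i else (σ (i - k - 1)).rename (· + k)

def extR (k : ℕ) (r : ℕ → ℕ) (i : ℕ) : ℕ :=
  if i ≤ k then i else k + 1 + r (i - k - 1)

theorem lift_extL (k : ℕ) (σ : ℕ → Lam) : Lam.liftSub (extL k σ) = extL (k+1) σ := by
  funext i
  cases i with
  | zero => simp [Lam.liftSub, extL]
  | succ j =>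
    simp only [Lam.liftSub, extL]
    by_cases h : j ≤ k
    · simp [h, Lam.rename_var]
    · have e : j + 1 - (k + 1) - 1 = j - k - 1 := by omega
      simp only [h, Nat.add_le_add_iff_right, if_false, Lam.rename_rename, e]
      congr 1

theorem lift_extD (k : ℕ) (σ : ℕ → DT) : DT.liftSub (extD k σ) = extD (k+1) σ := by
  funext i
  cases i with
  | zero => simp [DT.liftSub, extD]
  | succ j =>
    simp only [DT.liftSub, extD]
    by_cases h : j ≤ k
    · simp [h, DT.rename]
    · have e : j + 1 - (k + 1) - 1 = j - k - 1 := by omega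
      simp only [h, Nat.add_le_add_iff_right, if_false, DT.rename_rename, e]
      congr 1

theorem upr_extR (k : ℕ) (r : ℕ → ℕ) : Lam.upr (extR k r) = extR (k+1) r := by
  funext i
  cases i with
  | zero => simp [Lam.upr, extR]
  | succ j =>
    simp only [Lam.upr, extR]
    have e : j + 1 - (k + 1) - 1 = j - k - 1 := by omega
    simp only [e, Nat.add_le_add_iff_right]
    split_ifs <;> omega

theorem extR_extR (k : ℕ) (r r2 : ℕ → ℕ) (i : ℕ) :
    extR k r (extR k r2 i) = extR k (fun n => r (r2 n)) i := by
  unfold extR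
  by_cases h : i ≤ k
  · simp [h]
  · have e : k + 1 + r2 (i - k - 1) - k - 1 = r2 (i - k - 1) := by omega
    have e2 : ¬ (k + 1 + r2 (i - k - 1) ≤ k) := by omega
    simp only [h, if_false, e, e2]

theorem extL_extR (k : ℕ) (σ : ℕ → Lam) (r2 : ℕ → ℕ) (i : ℕ) :
    extL k σ (extR k r2 i) = extL k (fun n => σ (r2 n)) i := by
  unfold extL extR
  by_cases h : i ≤ k
  · simp [h]
  · have e : k + 1 + r2 (i - k - 1) - k - 1 = r2 (i - k - 1) := by omega
    have e2 : ¬ (k + 1 + r2 (i - k - 1) ≤ k) := by omega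
    simp only [h, if_false, e, e2]

theorem extD_extR (k : ℕ) (σ : ℕ → DT) (r2 : ℕ → ℕ) (i : ℕ) :
    extD k σ (extR k r2 i) = extD k (fun n => σ (r2 n)) i := by
  unfold extD extR
  by_cases h : i ≤ k
  · simp [h]
  · have e : k + 1 + r2 (i - k - 1) - k - 1 = r2 (i - k - 1) := by omega
    have e2 : ¬ (k + 1 + r2 (i - k - 1) ≤ k) := by omega
    simp only [h, if_false, e, e2]

def merge {α : Type} (a b : ℕ → α) (n : ℕ) : α := if n % 2 = 0 then a (n / 2) else b (n / 2)

theorem merge_even {α : Type} (a b : ℕ → α) : (fun n => merge a b (2 * n)) = a := by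
  funext n
  have h1 : 2 * n % 2 = 0 := by omega
  have h2 : 2 * n / 2 = n := by omega
  simp only [merge, h1, h2, if_true]

theorem merge_odd {α : Type} (a b : ℕ → α) : (fun n => merge a b (2 * n + 1)) = b := by
  funext n
  have h1 : (2 * n + 1) % 2 ≠ 0 := by omega
  have h2 : (2 * n + 1) / 2 = n := by omega
  simp only [merge, h1, h2, if_false]

/-- Linearization of a term with respect to its free variables `> k`. -/
theorem linearize (τ : Lam) (k : ℕ) : ∃ (τ2 : Lam) (r : ℕ → ℕ), τ2.rename (extR k r) = τ ∧
    ∀ (σ : ℕ → DT) (M : Lam), Sim (τ.toDT.subst (extD k σ)) M →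
      ∃ σ2 : ℕ → Lam, M = τ2.subst (extL k σ2) := by
  induction τ generalizing k with
  | var i =>
    by_cases h : i ≤ k
    · refine ⟨.var i, id, by simp [Lam.rename, extR, h], ?_⟩
      intro σ M hM
      simp only [Lam.toDT, DT.subst_var, extD, h, if_true] at hM
      cases hM
      exact ⟨Lam.var, by simp [Lam.subst_var, extL, h]⟩
    · refine ⟨.var (k+1), fun _ => i - k - 1, ?_, ?_⟩
      · simp [Lam.rename, extR]; omega
      · intro σ M hM
        simp only [Lam.toDT, DT.subst_var, extD, h, if_false] at hM
        obtain ⟨N, rfl⟩ := hM.unrename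
        exact ⟨fun _ => N, by simp [Lam.subst_var, extL]⟩
  | abs u ih =>
    obtain ⟨u2, r, h1, h2⟩ := ih (k+1)
    refine ⟨.abs u2, r, by rw [Lam.rename_abs, upr_extR, h1], ?_⟩
    intro σ M hM
    rw [Lam.toDT, DT.subst_abs, lift_extD] at hM
    cases hM with
    | abs hM =>
      obtain ⟨σ2, rfl⟩ := h2 _ _ hM
      exact ⟨σ2, by rw [Lam.subst_abs, lift_extL]⟩
  | app u v ihu ihv =>
    obtain ⟨u2, r1, h1, h2⟩ := ihu k
    obtain ⟨v2, r2, h3, h4⟩ := ihv k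
    refine ⟨.app (u2.rename (extR k (fun n => 2 * n))) (v2.rename (extR k (fun n => 2 * n + 1))),
      merge r1 r2, ?_, ?_⟩
    · simp only [Lam.rename_app, Lam.rename_rename, extR_extR, merge_even, merge_odd]
      rw [← h1, ← h3]
    · intro σ M hM
      rw [Lam.toDT, DT.subst_app] at hM
      cases hM with
      | app ha hb =>
        obtain ⟨σ1, rfl⟩ := h2 _ _ ha
        obtain ⟨σ2, rfl⟩ := h4 _ _ hb
        refine ⟨merge σ1 σ2, ?_⟩
        simp only [Lam.subst_app, Lam.rename_subst, extL_extR, merge_even, merge_odd]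

open Lam DT in
theorem backward (t T : Lam) (ht : Closed t) (hnt : Normal t) (hT : Closed T) (τ : Lam)
    (hτ : BetaEq τ t) (σ : ℕ → DT) (h0 : σ 0 = DT.var 0)
    (hred : DHeadRed (DT.app (DT.app T.toDT (DT.box t DT.var)) (DT.var 0))
            (DT.app (DT.var 0) (τ.toDT.subst σ))) : IsStorageFor T t := by
  have hσ : σ = extD 0 (fun n => σ (n+1)) := by
    funext i
    cases i with
    | zero => simp [extD, h0]
    | succ j => simp only [extD]; simp; exact (DT.rename_id _).symm
  obtain ⟨τ2, r, h1, h2⟩ := linearize τ 0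
  refine ⟨hT, τ2, eq_of_rename (ρ := extR 0 r) ht hnt (h1 ▸ hτ), ?_⟩
  intro θ hθ
  have hs : Sim (DT.app (DT.app T.toDT (DT.box t DT.var)) (DT.var 0))
      (Lam.app (Lam.app T θ) (Lam.var 0)) := by
    refine .app (.app (Sim.toDT T) ?_) (.var 0)
    have := Sim.box (as := DT.var) (bs := Lam.var) (Betas.std (hθ.betas hnt)) (fun i => .var i)
    rwa [Lam.subst_id] at this
  obtain ⟨M, hM, hsim⟩ := hs.steps (hred.whs (fun h => h))
  cases hsim with
  | app ha hb =>
    cases ha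
    rw [hσ] at hb
    obtain ⟨σ2, rfl⟩ := h2 _ _ hb
    exact ⟨_, by simp [extL], hM.headRed⟩


namespace Lam

def bb : ℕ → ℕ → Lam
  | 0, j => var j
  | n+1, j => app (abs (bb n (j+1))) (var j)

/-- A big closed term behaving as the identity, all of whose proper subterms use its variable. -/
def J (n : ℕ) : Lam := abs (bb n 0)

def size : Lam → ℕ
  | var _ => 1
  | app u v => u.size + v.size + 1
  | abs u => u.size + 1

theorem size_bb (n j : ℕ) : n < (bb n j).size := by
  induction n generalizing j with
  | zero => simp [bb, size]
  | succ n ih => simp only [bb, size]; have := ih (j+1); omega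

theorem size_J (n : ℕ) : n < (J n).size := by
  have := size_bb n 0
  simp only [J, size]; omega

theorem bb_whs (n j : ℕ) (σ : ℕ → Lam) : WHs ((bb n j).subst σ) (σ j) := by
  induction n generalizing j σ with
  | zero => exact .refl
  | succ n ih =>
    refine .head (.beta _ _) ?_
    rw [lift_inst]
    exact ih (j+1) (fun i => match i with | 0 => _ | j+1 => σ j)

theorem J_whs (n : ℕ) (X : Lam) : Relation.TransGen WH (app (J n) X) X := by
  refine Relation.TransGen.head' (.beta _ _) ?_
  rw [subst0_eq]
  exact bb_whs n 0 (inst X)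

theorem bb_subst (n j : ℕ) (σ : ℕ → Lam) (h : σ j = var j) : (bb n j).subst σ = bb n j := by
  induction n generalizing j σ with
  | zero => exact h
  | succ n ih =>
    simp only [bb, subst_app, subst_abs, subst_var, h]
    rw [ih]
    simp only [liftSub, h]; rfl

theorem J_subst (n : ℕ) (σ : ℕ → Lam) : (J n).subst σ = J n := by
  simp only [J, subst_abs]; rw [bb_subst]; rfl

def star (n : ℕ) : Lam → Lam
  | var i => app (J n) (var i)
  | app u v => app (J n) (app (star n u) (star n v))
  | abs u => app (J n) (abs (star n u))

theorem star_eq (n : ℕ) (s : Lam) : BetaEq (star n s) s := by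
  have key : ∀ X, BetaEq (app (J n) X) X := fun X => WHs.eq (J_whs n X).to_reflTransGen
  induction s with
  | var i => exact key _
  | app u v hu hv => exact .trans _ _ _ (key _) (hu.app hv)
  | abs u hu => exact .trans _ _ _ (key _) hu.abs

def Occ (j : ℕ) : Lam → Prop
  | var i => i = j
  | app u v => Occ j u ∨ Occ j v
  | abs u => Occ (j+1) u

theorem Occ_rename (M : Lam) (ρ : ℕ → ℕ) (j : ℕ) (h : Occ j (M.rename ρ)) : ∃ i, ρ i = j := by
  induction M generalizing ρ j with
  | var i => exact ⟨i, h⟩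
  | app u v hu hv => exact h.elim (hu _ _) (hv _ _)
  | abs u hu =>
    rw [rename_abs] at h
    obtain ⟨i, hi⟩ := hu _ _ h
    cases i with
    | zero => simp [upr] at hi
    | succ i => simp [upr] at hi; exact ⟨i, hi⟩

theorem Occ_rename_succ (M : Lam) (ρ : ℕ → ℕ) (hρ : Function.Injective ρ) (j : ℕ)
    (h : Occ (ρ j) (M.rename ρ)) : Occ j M := by
  induction M generalizing ρ j with
  | var i => exact hρ h
  | app u v hu hv => exact h.imp (hu _ hρ _) (hv _ hρ _)
  | abs u hu =>
    rw [rename_abs] at h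
    refine hu (upr ρ) ?_ (j+1) h
    intro a b hab
    cases a <;> cases b <;> simp [upr] at hab ⊢
    exact hρ hab

theorem Occ_bb (n j : ℕ) : Occ j (bb n j) := by
  cases n with
  | zero => rfl
  | succ n => exact Or.inr rfl

theorem bb_unsubst (n j : ℕ) (σ : ℕ → Lam) (h : σ j = var j) (h2 : ∀ i, Occ j (σ i) → i = j)
    (q : Lam) (hq : q.subst σ = bb n j) : q = bb n j := by
  have hvar : ∀ (n j : ℕ) (σ : ℕ → Lam), σ j = var j → (∀ i, Occ j (σ i) → i = j) →
      ∀ i, σ i = bb n j → var i = bb n j := by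
    intro n j σ h h2 i hi
    have : i = j := h2 i (hi ▸ Occ_bb n j)
    subst this; rw [← hi, h]
  induction n generalizing j σ q with
  | zero =>
    cases q with
    | var i => exact hvar _ _ _ h h2 i hq
    | app u v => cases hq
    | abs u => cases hq
  | succ n ih =>
    cases q with
    | var i => exact hvar _ _ _ h h2 i hq
    | abs u => cases hq
    | app u v =>
      simp only [subst_app, bb, app.injEq] at hq
      obtain ⟨hu, hv⟩ := hq
      have ev : v = var j := by
        cases v with
        | var i => exact hvar 0 j σ h h2 i hv
        | app u v => cases hv
        | abs u => cases hv
      have eu : u = abs (bb n (j+1)) := by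
        cases u with
        | var i =>
          have : i = j := h2 i (by rw [subst_var] at hu; rw [hu]; exact Occ_bb n (j+1))
          subst this
          rw [subst_var, h] at hu; cases hu
        | app u v => cases hu
        | abs u =>
          simp only [subst_abs, abs.injEq] at hu
          rw [ih (j+1) (liftSub σ) ?_ ?_ u hu]
          · simp only [liftSub, h]; rfl
          · intro i hi
            cases i with
            | zero => simp [liftSub, Occ] at hi
            | succ i =>
              simp only [liftSub] at hi
              rw [h2 i (Occ_rename_succ _ _ (add_left_injective 1) j hi)]
      rw [eu, ev]; rfl

theorem J_unsubst (n : ℕ) (σ : ℕ → Lam) (u : Lam) (h : (abs u).subst σ = J n) : abs u = J n := by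
  simp only [subst_abs, J, abs.injEq] at h ⊢
  refine bb_unsubst n 0 (liftSub σ) rfl ?_ u h
  intro i hi
  cases i with
  | zero => rfl
  | succ i =>
    obtain ⟨a, ha⟩ := Occ_rename _ _ _ hi
    omega

/-- Replace every occurrence of `J n` by `λz f`, where `f` is the variable `k`. -/
def psi (n : ℕ) : ℕ → Lam → Lam
  | _, var i => var i
  | k, app u v => app (psi n k u) (psi n k v)
  | k, abs u => if abs u = J n then abs (var (k+1)) else abs (psi n (k+1) u)

theorem psi_rename (n : ℕ) (M : Lam) (k k2 : ℕ) (ρ : ℕ → ℕ) (h : ρ k = k2) :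
    psi n k2 (M.rename ρ) = (psi n k M).rename ρ := by
  induction M generalizing k k2 ρ with
  | var i => rfl
  | app u v hu hv => simp only [rename_app, psi, hu k k2 ρ h, hv k k2 ρ h]
  | abs u hu =>
    by_cases hJ : abs u = J n
    · have e : (abs u).rename ρ = J n := by rw [hJ, rename_eq_subst, J_subst]
      rw [rename_abs] at e ⊢
      simp only [psi, e, hJ, if_true, rename_abs, rename_var, upr, h]
    · have e : (abs u).rename ρ ≠ J n := by
        intro e; rw [rename_eq_subst] at e; exact hJ (J_unsubst n _ u e)
      rw [rename_abs] at e ⊢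
      simp only [psi, e, hJ, if_false, rename_abs]
      rw [hu (k+1) (k2+1) (upr ρ) (by simp [upr, h])]

theorem psi_subst (n : ℕ) (M : Lam) (hM : M.size < (J n).size) (k : ℕ) (σ : ℕ → Lam) :
    psi n k (M.subst σ) = M.subst (fun i => psi n k (σ i)) := by
  induction M generalizing k σ with
  | var i => rfl
  | app u v hu hv =>
    simp only [size] at hM
    simp only [subst_app, psi, hu (by omega), hv (by omega)]
  | abs u hu =>
    have e : (abs u).subst σ ≠ J n := by
      intro e
      have := J_unsubst n σ u e
      rw [this] at hM; omega
    simp only [size] at hM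
    rw [subst_abs] at e ⊢
    simp only [psi, e, if_false, hu (by omega), subst_abs]
    congr 2
    funext i
    cases i with
    | zero => rfl
    | succ j => exact psi_rename n _ k (k+1) _ rfl

/-- Translation of directed terms. -/
def tr (n : ℕ) : DT → Lam
  | .var i => var i
  | .app u v => app (tr n u) (tr n v)
  | .abs u => abs (tr n u)
  | .box s as => (star n s).subst (fun i => tr n (as i))

theorem tr_rename (n : ℕ) (D : DT) (ρ : ℕ → ℕ) : tr n (D.rename ρ) = (tr n D).rename ρ := by
  induction D generalizing ρ with
  | var i => rfl
  | app u v hu hv => simp only [DT.rename_app, tr, rename_app, hu, hv]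
  | abs u hu => simp only [DT.rename_abs, tr, rename_abs, hu]
  | box s as ih => simp only [DT.rename_box, tr, subst_rename, ih]

theorem tr_lift (n : ℕ) (σ : ℕ → DT) :
    (fun i => tr n (DT.liftSub σ i)) = liftSub (fun i => tr n (σ i)) := by
  funext i
  cases i with
  | zero => rfl
  | succ j => exact tr_rename n _ _

theorem tr_subst (n : ℕ) (D : DT) (σ : ℕ → DT) :
    tr n (D.subst σ) = (tr n D).subst (fun i => tr n (σ i)) := by
  induction D generalizing σ with
  | var i => rfl
  | app u v hu hv => simp only [DT.subst_app, tr, subst_app, hu, hv]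
  | abs u hu => simp only [DT.subst_abs, tr, subst_abs, hu, tr_lift]
  | box s as ih => simp only [DT.subst_box, tr, subst_subst, ih]

theorem tr_toDT (n : ℕ) (T : Lam) : tr n T.toDT = T := by
  induction T with
  | var i => rfl
  | app u v hu hv => simp only [toDT, tr, hu, hv]
  | abs u hu => simp only [toDT, tr, hu]

theorem tr_box (n : ℕ) (s : Lam) (as : ℕ → DT) :
    ∃ X, tr n (.box s as) = app (J n) X ∧ X = tr n (DT.contract s as) := by
  cases s with
  | var i => exact ⟨tr n (DT.contract (.var i) as), by simp only [tr, star, subst_app, J_subst]; rfl, rfl⟩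
  | app u v => exact ⟨tr n (DT.contract (.app u v) as), by simp only [tr, star, subst_app, J_subst]; rfl, rfl⟩
  | abs u =>
    refine ⟨tr n (DT.contract (.abs u) as), ?_, rfl⟩
    simp only [tr, star, subst_app, J_subst, DT.contract_abs, tr_lift, subst_abs]

theorem whp_appL {M N : Lam} (h : Relation.TransGen WH M N) (v : Lam) :
    Relation.TransGen WH (app M v) (app N v) := by
  induction h with
  | single h => exact .single (.appL _ h)
  | tail _ h ih => exact .tail ih (.appL _ h)

theorem tr_step (n : ℕ) {D D2 : DT} (h : DT.DW D D2) :
    Relation.TransGen WH (tr n D) (tr n D2) := by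
  induction h with
  | beta u v =>
    have : tr n (u.subst0 v) = (tr n u).subst0 (tr n v) := by
      rw [DT.subst0_eq, subst0_eq, tr_subst]
      congr 1
      funext i; cases i <;> rfl
    rw [this]
    exact .single (.beta _ _)
  | box s as =>
    obtain ⟨X, h1, h2⟩ := tr_box n s as
    rw [h1, ← h2]; exact J_whs n X
  | appL v _ ih =>
    simp only [tr]
    exact whp_appL ih _

theorem tr_steps (n : ℕ) {D D2 : DT} (h : DT.DWs D D2) : WHs (tr n D) (tr n D2) := by
  induction h with
  | refl => exact .refl
  | tail _ h ih => exact ih.trans (tr_step n h).to_reflTransGen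

theorem tr_normal (n : ℕ) {D : DT} (h : ∀ E, ¬ DT.DW D E) : ∀ X, ¬ WH (tr n D) X := by
  induction D with
  | var i => intro X hX; cases hX
  | abs u _ => intro X hX; cases hX
  | box s as _ => exact absurd (.box s as) (h _)
  | app u v hu _ =>
    intro X hX
    have hu2 := hu (fun E hE => h _ (.appL v hE))
    simp only [tr] at hX
    generalize hw : tr n u = w at hX
    cases hX with
    | appL _ hX => subst hw; exact hu2 _ hX
    | beta a _ =>
      cases u with
      | var i => cases hw
      | app _ _ => cases hw
      | abs u => exact h _ (.beta u v)
      | box s as => exact h _ (.appL v (.box s as))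

theorem acc_of_whs {M N : Lam} (h : WHs M N) (hN : ∀ x, ¬ WH N x) :
    Acc (fun a b => WH b a) M := by
  induction h using Relation.ReflTransGen.head_induction_on with
  | refl => exact ⟨_, fun y hy => absurd hy (hN y)⟩
  | head h _ ih => exact ⟨_, fun y hy => h.det hy ▸ ih⟩

theorem exists_nf (n : ℕ) (D : DT) (h : Acc (fun a b => WH b a) (tr n D)) :
    ∃ E, DT.DWs D E ∧ ∀ F, ¬ DT.DW E F := by
  have h2 := h.transGen
  generalize hM : tr n D = M at h2
  clear h
  induction h2 generalizing D with
  | intro M _ ih =>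
    by_cases hD : ∃ E, DT.DW D E
    · obtain ⟨E, hE⟩ := hD
      have hs := tr_step n hE
      rw [hM] at hs
      obtain ⟨F, h1, h2⟩ := ih (tr n E) (Relation.transGen_swap.2 hs) E rfl
      exact ⟨F, .head hE h1, h2⟩
    · push Not at hD
      exact ⟨D, .refl, hD⟩

end Lam

/- The shape of reducts: boxes never contain bound variables. -/

open Lam in
inductive Good (t : Lam) : ℕ → DT → Prop
  | var {k i : ℕ} : i ≤ k → Good t k (.var i)
  | app {k : ℕ} {u v : DT} : Good t k u → Good t k v → Good t k (.app u v)
  | abs {k : ℕ} {u : DT} : Good t (k+1) u → Good t k (.abs u)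
  | box {k m : ℕ} {s : Lam} {as bs : ℕ → DT} : Subterm s t → ClosedUnder m s → (∀ i < m, Good t 0 (bs i)) →
      as = (fun i => (bs i).rename (· + k)) → Good t k (.box s as)

theorem Good.ren {t : Lam} {k : ℕ} {D : DT} (h : Good t k D) (k2 : ℕ) (ρ : ℕ → ℕ)
    (h1 : ∀ i < k, ρ i < k2) (h2 : ∀ i, ρ (i + k) = i + k2) : Good t k2 (D.rename ρ) := by
  induction h generalizing k2 ρ with
  | @var k i h =>
    refine .var ?_
    rcases Nat.lt_or_ge i k with hi | hi
    · exact (h1 i hi).le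
    · have : i = 0 + k := by omega
      rw [this, h2]; omega
  | app _ _ hu hv => exact .app (hu _ _ h1 h2) (hv _ _ h1 h2)
  | @abs k u _ hu =>
    rw [DT.rename_abs]
    refine .abs (hu _ _ ?_ ?_)
    · intro i hi
      cases i with
      | zero => simp [Lam.upr]
      | succ j => simp only [Lam.upr]; have := h1 j (by omega); omega
    · intro i
      have := h2 i
      show ρ (i + k) + 1 = _
      omega
  | box hs hm hb he _ =>
    rw [DT.rename_box]
    refine .box hs hm hb ?_
    subst he
    funext i
    rw [DT.rename_rename]
    congr 1
    funext i
    exact h2 i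

theorem Good.sub {t : Lam} {k : ℕ} {D : DT} (h : Good t k D) (k2 : ℕ) (σ : ℕ → DT)
    (h1 : ∀ i < k, Good t k2 (σ i)) (h2 : ∀ i, σ (i + k) = .var (i + k2)) :
    Good t k2 (D.subst σ) := by
  induction h generalizing k2 σ with
  | @var k i h =>
    rw [DT.subst_var]
    rcases Nat.lt_or_ge i k with hi | hi
    · exact h1 i hi
    · have : i = 0 + k := by omega
      rw [this, h2]; exact .var (by omega)
  | app _ _ hu hv => exact .app (hu _ _ h1 h2) (hv _ _ h1 h2)
  | @abs k u _ hu =>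
    refine .abs (hu _ _ ?_ ?_)
    · intro i hi
      cases i with
      | zero => exact .var (by omega)
      | succ j =>
        exact (h1 j (by omega)).ren (k2+1) _ (fun i hi => by omega) (fun i => by omega)
    · intro i
      show (σ (i + k)).rename (· + 1) = _
      rw [h2]; rfl
  | box hs hm hb he _ =>
    rw [DT.subst_box]
    refine .box hs hm hb ?_
    subst he
    funext i
    rw [DT.rename_subst, DT.rename_eq_subst]
    congr 1
    funext i
    exact h2 i

theorem Good.toDT {t : Lam} (T : Lam) (k : ℕ) (h : Lam.ClosedUnder k T) : Good t k T.toDT := by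
  induction T generalizing k with
  | var i => exact .var (le_of_lt h)
  | app u v hu hv => exact .app (hu k h.1) (hv k h.2)
  | abs u hu => exact .abs (hu (k+1) h)

open Lam in
inductive GoodH (t : Lam) : DT → Prop
  | base {D : DT} : Good t 0 D → GoodH t D
  | lam {m : ℕ} {u : Lam} {bs : ℕ → DT} : Subterm u t → ClosedUnder (m+1) u → (∀ i < m, Good t 0 (bs i)) →
      GoodH t (.abs (.box u (DT.liftSub bs)))
  | app {D E : DT} : GoodH t D → Good t 0 E → GoodH t (.app D E)

theorem GoodH.app_inv {t : Lam} {D E : DT} (h : GoodH t (.app D E)) : GoodH t D ∧ Good t 0 E := by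
  cases h with
  | base h => cases h with
    | app h1 h2 => exact ⟨.base h1, h2⟩
  | app h1 h2 => exact ⟨h1, h2⟩

theorem Subterm.trans {a b c : Lam} (h : Subterm a b) (h2 : Subterm b c) : Subterm a c := by
  induction h2 with
  | refl => exact h
  | appL v _ ih => exact .appL v (ih h)
  | appR u _ ih => exact .appR u (ih h)
  | abs _ ih => exact .abs (ih h)

theorem GoodH.step {t : Lam} {D E : DT} (h : GoodH t D) (hd : DT.DW D E) : GoodH t E := by
  induction hd with
  | appL v _ ih =>
    obtain ⟨h1, h2⟩ := h.app_inv
    exact .app (ih h1) h2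
  | beta u v =>
    obtain ⟨h1, h2⟩ := h.app_inv
    refine .base ?_
    rw [DT.subst0_eq]
    cases h1 with
    | base h1 =>
      cases h1 with
      | abs h1 =>
        refine h1.sub 0 _ ?_ ?_
        · intro i hi
          have : i = 0 := by omega
          subst this; exact h2
        · intro i; rfl
    | @lam m u bs hs hm hb =>
      rw [DT.subst_box]
      refine .box (m := m+1) (bs := fun i => (DT.liftSub bs i).subst (DT.inst v)) hs hm ?_ ?_
      · intro i hi
        cases i with
        | zero => exact h2
        | succ j =>
          simp only [DT.liftSub, DT.rename_subst, DT.inst]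
          have := hb j (by omega)
          rwa [← DT.subst_id (bs j)] at this
      · funext i; exact (DT.rename_id _).symm
  | box s as =>
    cases h with
    | base h =>
      cases h with
      | @box _ m _ _ bs hs hm hb he =>
        have he2 : as = bs := by
          rw [he]; funext i; exact DT.rename_id _
        subst he2
        cases s with
        | var i => exact .base (hb i hm)
        | app u v =>
          exact .base (.app (.box (.trans (.appL _ (.refl _)) hs) hm.1 hb he)
            (.box (.trans (.appR _ (.refl _)) hs) hm.2 hb he))
        | abs u =>
          rw [DT.contract_abs]
          exact .lam (m := m) (.trans (.abs (.refl _)) hs) hm hb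

theorem GoodH.steps {t : Lam} {D E : DT} (h : GoodH t D) (hd : DT.DWs D E) : GoodH t E := by
  induction hd with
  | refl => exact h
  | tail _ hd ih => exact ih.step hd

theorem Good.extract {t : Lam} {k : ℕ} {D : DT} (h : Good t k D) :
    ∃ (τ : Lam) (σ : ℕ → DT), (∀ n, ∃ s as, Subterm s t ∧ σ n = .box s as) ∧
      D = τ.toDT.subst (extD k σ) := by
  have ren : ∀ (τ : Lam) (ρ : ℕ → ℕ) (σ : ℕ → DT),
      (τ.rename ρ).toDT.subst σ = τ.toDT.subst (fun i => σ (ρ i)) := by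
    intro τ
    induction τ with
    | var i => intros; rfl
    | app u v hu hv => intros; simp only [Lam.rename_app, Lam.toDT, DT.subst_app, hu, hv]
    | abs u hu =>
      intro ρ σ
      simp only [Lam.rename_abs, Lam.toDT, DT.subst_abs, hu]
      congr 2
      funext i; cases i <;> rfl
  induction h with
  | @var k i h =>
    exact ⟨.var i, fun _ => .box t .var, fun _ => ⟨t, _, .refl t, rfl⟩,
      by simp [Lam.toDT, DT.subst_var, extD, h]⟩
  | @abs k u _ hu =>
    obtain ⟨τ, σ, h1, h2⟩ := hu
    exact ⟨.abs τ, σ, h1, by rw [Lam.toDT, DT.subst_abs, lift_extD, h2]⟩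
  | @app k u v _ _ hu hv =>
    obtain ⟨τ1, σ1, h1, h2⟩ := hu
    obtain ⟨τ2, σ2, h3, h4⟩ := hv
    refine ⟨.app (τ1.rename (extR k (fun n => 2 * n))) (τ2.rename (extR k (fun n => 2 * n + 1))),
      merge σ1 σ2, ?_, ?_⟩
    · intro n
      unfold merge
      split_ifs
      · exact h1 _
      · exact h3 _
    · simp only [Lam.toDT, DT.subst_app, ren, extD_extR, merge_even, merge_odd]
      rw [h2, h4]
  | @box k m s as bs hs _ _ he _ =>
    refine ⟨.var (k+1), fun _ => .box s bs, fun _ => ⟨s, bs, hs, rfl⟩, ?_⟩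
    simp [Lam.toDT, DT.subst_var, extD, he, DT.rename_box]

open Lam DT in
theorem forward (t T : Lam) (ht : Closed t) (hnt : Normal t) (h : IsStorageFor T t) :
      ∃ τ : Lam, BetaEq τ t ∧
        ∃ σ : ℕ → DT,
          σ 0 = DT.var 0 ∧
          (∀ i : ℕ, σ i = DT.var i ∨
            ∃ (s : Lam) (as : ℕ → DT), Subterm s t ∧ σ i = DT.box s as) ∧
          DHeadRed (DT.app (DT.app T.toDT (DT.box t DT.var)) (DT.var 0))
            (DT.app (DT.var 0) (τ.toDT.subst σ)) := by
  obtain ⟨hT, τ0, hτ0, hst⟩ := h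
  have nf : ∀ (P : Lam) X, ¬ WH (Lam.app (Lam.var 0) P) X := by
    intro P X h
    cases h with
    | appL _ h => cases h
  have hU : ∀ n, tr n (DT.app (DT.app T.toDT (DT.box t DT.var)) (DT.var 0)) =
      Lam.app (Lam.app T (star n t)) (Lam.var 0) := by
    intro n
    simp only [tr, tr_toDT]
    rw [show (star n t).subst (fun i => Lam.var i) = star n t from Lam.subst_id _]
  have hW : ∀ n, ∃ σ : ℕ → Lam,
      WHs (tr n (DT.app (DT.app T.toDT (DT.box t DT.var)) (DT.var 0)))
        (Lam.app (Lam.var 0) (τ0.subst σ)) := by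
    intro n
    obtain ⟨σ, _, h⟩ := hst _ (star_eq n t)
    exact ⟨σ, by rw [hU]; exact h.whs (fun h => h)⟩
  obtain ⟨σ0, h0⟩ := hW 0
  obtain ⟨E, hE, hEn⟩ := exists_nf 0 _ (acc_of_whs h0 (nf _))
  have hall : ∀ n (σ : ℕ → Lam),
      WHs (tr n (DT.app (DT.app T.toDT (DT.box t DT.var)) (DT.var 0)))
        (Lam.app (Lam.var 0) (τ0.subst σ)) → tr n E = Lam.app (Lam.var 0) (τ0.subst σ) := by
    intro n σ h
    exact (tr_steps n hE).unique h (tr_normal n hEn) (nf _)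
  have hshape : ∃ D1, E = DT.app (DT.var 0) D1 := by
    have h1 := hall 0 _ h0
    cases E with
    | var i => cases h1
    | abs u => cases h1
    | box s as => exact absurd (.box s as) (hEn _)
    | app u v =>
      simp only [tr, Lam.app.injEq] at h1
      cases u with
      | var i => obtain ⟨h1, _⟩ := h1; cases h1; exact ⟨v, rfl⟩
      | abs u => cases h1.1
      | app u w => cases h1.1
      | box s as => exact absurd (.appL v (.box s as)) (hEn _)
  obtain ⟨D1, rfl⟩ := hshape
  have hg : GoodH t (DT.app (DT.app T.toDT (DT.box t DT.var)) (DT.var 0)) := by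
    refine .base (.app (.app (Good.toDT T 0 hT) ?_) (.var (le_refl 0)))
    exact .box (m := 0) (bs := DT.var) (.refl t) ht (fun i hi => absurd hi (by omega)) rfl
  obtain ⟨τ, σ, hσ, hD⟩ := ((hg.steps hE).app_inv).2.extract
  refine ⟨τ, ?_, extD 0 σ, by simp [extD], ?_, ?_⟩
  · obtain ⟨n, hn⟩ : ∃ n, n = τ.size + τ0.size := ⟨_, rfl⟩
    obtain ⟨σn, hs⟩ := hW n
    have e := hall n _ hs
    simp only [tr, Lam.app.injEq, true_and] at e
    rw [hD, tr_subst, tr_toDT] at e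
    have e2 := congrArg (psi n 0) e
    have hJ := size_J n
    rw [psi_subst n τ (by omega), psi_subst n τ0 (by omega)] at e2
    have h1 : BetaEq (τ0.subst (fun i => psi n 0 (σn i))) t := by
      have := hτ0.sub (fun i => psi n 0 (σn i))
      rwa [closed_subst t 0 _ ht (fun i hi => absurd hi (by omega))] at this
    rw [← e2] at h1
    refine eq_of_rename (ρ := fun _ => 0) ht hnt ?_
    rw [Lam.rename_eq_subst]
    refine .trans _ _ _ (BetaEq.subPt _ _ _ ?_) h1
    intro i
    refine .symm _ _ ?_
    cases i with
    | zero => exact .refl _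
    | succ j =>
      obtain ⟨s, as, _, hb⟩ := hσ j
      have : extD 0 σ (j+1) = DT.box s as := by
        simp only [extD]; simp [hb]; exact DT.rename_id (DT.box s as)
      rw [this]
      obtain ⟨X, hX, _⟩ := tr_box n s as
      rw [hX]
      have hp : psi n 0 (Lam.app (J n) X) = Lam.app (Lam.abs (Lam.var 1)) (psi n 0 X) := by
        simp [psi, J]
      rw [hp]
      exact .rel _ _ (.beta _ _)
  · intro i
    cases i with
    | zero => left; simp [extD]
    | succ j =>
      right
      obtain ⟨s, as, h1, hb⟩ := hσ j
      refine ⟨s, as, h1, ?_⟩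
      simp only [extD]; simp [hb]; exact DT.rename_id (DT.box s as)
  · rw [← hD]
    exact rtg_lift id (fun _ _ h => DT.DW.head h) hE


open Lam DT in
/-- Characterization of storage operators via the directed λ-calculus :
`T` is a storage operator for the closed normal term `t` iff there is a
`τ ≃β t` such that `(T)[t]f` `β[□]`-head reduces to
`(f)τ[[t₁]⟨a̅₁/x̅₁⟩/y₁, …, [tₘ]⟨a̅ₘ/x̅ₘ⟩/yₘ]`, where the `tᵢ` are subterms of `t`. -/
theorem stmt7 (t T : Lam) (ht : Closed t) (hnt : Normal t) (hT : Closed T) :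
    IsStorageFor T t ↔
      ∃ τ : Lam, BetaEq τ t ∧
        ∃ σ : ℕ → DT,
          σ 0 = DT.var 0 ∧
          (∀ i : ℕ, σ i = DT.var i ∨
            ∃ (s : Lam) (as : ℕ → DT), Subterm s t ∧ σ i = DT.box s as) ∧
          DHeadRed (DT.app (DT.app T.toDT (DT.box t DT.var)) (DT.var 0))
            (DT.app (DT.var 0) (τ.toDT.subst σ)) := by
  constructor
  · intro h
    exact forward t T ht hnt h
  · rintro ⟨τ, hτ, σ, h0, _, hred⟩
    exact backward t T ht hnt hT τ hτ σ h0 hred
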